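/- arXiv:1112.0253 — 5 statements merged into one kernel-verified Lean document; each statement's English description precedes it below -/
import Mathlib

section
/- Let z, z', z'' ∈ (ℝ²)⁵ with zᵢ ≠ 0 for all i, and suppose there exist nonzero real scalars αᵢ, βᵢ (i = 1,…,5) such that z'ᵢ = αᵢzᵢ and z''ᵢ = βᵢzᵢ. Then for every w ∈ ℝ¹⁰: wᵀ(A_e^{(2)}·D(z')ᵀ·D(z)) = 0 if and only if wᵀ(A_e^{(2)}·D(z'')ᵀ) = 0. (In the formation-control interpretation, w is a left eigenvector of the Jacobian ∂F/∂z with eigenvalue 0 if and only if wᵀ∂F/∂d = 0, for frameworks in which z₁ is parallel to z₅.) -/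
open Matrix

/-- The edge-adjacency matrix of the 2-cycles. -/
def Ae : Matrix (Fin 5) (Fin 5) ℝ :=
  !![-1, 1, 0, 0, -1;
      0, -1, 1, 0, 0;
      1, 0, -1, 0, 1;
      0, 0, 1, -1, 0;
     -1, 0, 0, 1, -1]

/-- `A_e^{(2)} = A_e ⊗ I₂`, the Kronecker product with the 2×2 identity. -/
noncomputable def Ae2 : Matrix (Fin 5 × Fin 2) (Fin 5 × Fin 2) ℝ :=
  Matrix.kroneckerMap (· * ·) Ae (1 : Matrix (Fin 2) (Fin 2) ℝ)

/-- `D(z)`: the 5×10 block-diagonal matrix whose `i`-th diagonal block is the row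
vector `zᵢᵀ`. -/
def Dmat (z : Fin 5 → Fin 2 → ℝ) : Matrix (Fin 5) (Fin 5 × Fin 2) ℝ :=
  Matrix.of fun i p => if p.1 = i then z i p.2 else 0

/-- Suppose `zᵢ ≠ 0` and `z'ᵢ = αᵢ zᵢ`, `z''ᵢ = βᵢ zᵢ` with all `αᵢ, βᵢ` nonzero.
Then `w` annihilates `A_e^{(2)}·D(z')ᵀ·D(z)` on the left iff it annihilates
`A_e^{(2)}·D(z'')ᵀ` on the left. (`w` is a left zero-eigenvector of the Jacobian
`∂F/∂z` iff `wᵀ∂F/∂d = 0`.) -/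
theorem left_kernel_jacobian_iff_parameter (z z' z'' : Fin 5 → Fin 2 → ℝ)
    (α β : Fin 5 → ℝ) (hz : ∀ i, z i ≠ 0) (hα : ∀ i, α i ≠ 0) (hβ : ∀ i, β i ≠ 0)
    (hz' : ∀ i, z' i = α i • z i) (hz'' : ∀ i, z'' i = β i • z i)
    (w : Fin 5 × Fin 2 → ℝ) :
    Matrix.vecMul w (Ae2 * (Dmat z')ᵀ * Dmat z) = 0
      ↔ Matrix.vecMul w (Ae2 * (Dmat z'')ᵀ) = 0 := by
  have h1 : ∀ (y : Fin 5 → ℝ) (p : Fin 5 × Fin 2), (y ᵥ* Dmat z) p = y p.1 * z p.1 p.2 := by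
    intro y p
    simp [Matrix.vecMul, dotProduct, Dmat]
  have key : ∀ (x : Fin 5 → Fin 2 → ℝ) (γ : Fin 5 → ℝ), (∀ i, x i = γ i • z i) →
      ∀ (u : Fin 5 × Fin 2 → ℝ) (i : Fin 5),
        (u ᵥ* (Dmat x)ᵀ) i = γ i * (u ᵥ* (Dmat z)ᵀ) i := by
    intro x γ hx u i
    simp only [Matrix.vecMul, dotProduct, Dmat, Matrix.transpose_apply, Matrix.of_apply, hx,
      Finset.mul_sum, Pi.smul_apply, smul_eq_mul]
    refine Finset.sum_congr rfl fun p _ => ?_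
    split_ifs <;> ring
  rw [← Matrix.vecMul_vecMul, ← Matrix.vecMul_vecMul, ← Matrix.vecMul_vecMul]
  generalize w ᵥ* Ae2 = u
  constructor
  · intro h
    funext i
    rw [key z'' β hz'' u i]
    obtain ⟨j, hj⟩ := Function.ne_iff.mp (hz i)
    have h2 := congrFun h (i, j)
    rw [h1, key z' α hz' u i] at h2
    simp only [Pi.zero_apply, mul_eq_zero] at h2 hj ⊢
    rcases h2 with (h2 | h2) | h2
    · exact absurd h2 (hα i)
    · exact Or.inr h2
    · exact absurd h2 hj
  · intro h
    funext p
    have h2 := congrFun h p.1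
    rw [key z'' β hz'' u p.1] at h2
    rw [h1, key z' α hz' u p.1]
    rcases mul_eq_zero.mp h2 with h2 | h2
    · exact absurd h2 (hβ _)
    · simp [h2]
end

section
/- Let z, z' ∈ (ℝ²)⁵ and suppose there exist real scalars a, b such that z'₁ = a·z₁ and z'₅ = b·z₁ (this holds in particular at frameworks where z₅ is parallel to z₁ and z'₁, z'₅ lie in the span of z₁ and z₅). Then the 5×5 matrix J = D(z)·A_e^{(2)}·D(z')ᵀ is singular: det J = 0. Hence the Jacobian of the 2-cycles dynamics is degenerate (has corank at least 1) at frameworks with z₁ parallel to z₅. -/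
open Matrix

theorem J_entry (z z' : Fin 5 → Fin 2 → ℝ) (i j : Fin 5) :
    (Dmat z * Ae2 * (Dmat z')ᵀ) i j = Ae i j * (z i 0 * z' j 0 + z i 1 * z' j 1) := by
  simp only [Matrix.mul_apply, Dmat, Ae2, Matrix.transpose_apply, Matrix.of_apply,
    Matrix.kroneckerMap_apply, Fintype.sum_prod_type, Fin.sum_univ_two, Matrix.one_apply]
  simp [Finset.sum_add_distrib]
  ring

/-- If `z'₁ = a·z₁` and `z'₅ = b·z₁` (as happens at frameworks where `z₅` is parallel
to `z₁`), then the 5×5 matrix `J = D(z)·A_e^{(2)}·D(z')ᵀ` is singular: the Jacobian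
of the 2-cycles dynamics is degenerate at frameworks with `z₁` parallel to `z₅`. -/
theorem jacobian_singular_on_S (z z' : Fin 5 → Fin 2 → ℝ) (a b : ℝ)
    (h1 : z' 0 = a • z 0) (h5 : z' 4 = b • z 0) :
    (Dmat z * Ae2 * (Dmat z')ᵀ).det = 0 := by
  by_cases ha : a = 0
  · apply Matrix.det_eq_zero_of_column_eq_zero 0
    intro i
    rw [J_entry, h1, ha]
    simp
  · apply Matrix.exists_mulVec_eq_zero_iff.mp
    refine ⟨![b, 0, 0, 0, -a], ?_, ?_⟩
    · intro h
      have := congrFun h 4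
      simp at this
      exact ha this
    · ext i
      have hA : Ae i 4 = Ae i 0 := by
        fin_cases i <;> simp [Ae]
      simp only [Matrix.mulVec, dotProduct, J_entry, Fin.sum_univ_five, h1, h5, hA]
      simp
      ring
end

section
/- Let z, z', z'' ∈ (ℝ²)⁵ with zᵢ ≠ 0 for all i, and suppose there exist nonzero real scalars αᵢ, βᵢ (i = 1,…,5) such that z'ᵢ = αᵢzᵢ and z''ᵢ = βᵢzᵢ. Then there exists a nonzero vector w ∈ ℝ¹⁰ such that both wᵀ(A_e^{(2)}·D(z')ᵀ·D(z)) = 0 and wᵀ(A_e^{(2)}·D(z'')ᵀ) = 0. (In the formation-control interpretation: for edge lengths in 𝒮₀ there is a nonzero covector annihilating both the Jacobian ∂F/∂z at the design equilibrium and the parameter Jacobian ∂F/∂d.) -/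
open Matrix

/-- Suppose `zᵢ ≠ 0` and `z'ᵢ = αᵢ zᵢ`, `z''ᵢ = βᵢ zᵢ` with all `αᵢ, βᵢ` nonzero.
Then there is a nonzero covector `w ∈ ℝ¹⁰` annihilating both the Jacobian form
`A_e^{(2)}·D(z')ᵀ·D(z)` and the parameter Jacobian form `A_e^{(2)}·D(z'')ᵀ` on the
left. -/
theorem exists_common_left_annihilator (z z' z'' : Fin 5 → Fin 2 → ℝ)
    (α β : Fin 5 → ℝ) (hz : ∀ i, z i ≠ 0) (hα : ∀ i, α i ≠ 0) (hβ : ∀ i, β i ≠ 0)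
    (hz' : ∀ i, z' i = α i • z i) (hz'' : ∀ i, z'' i = β i • z i) :
    ∃ w : Fin 5 × Fin 2 → ℝ, w ≠ 0 ∧
      Matrix.vecMul w (Ae2 * (Dmat z')ᵀ * Dmat z) = 0 ∧
      Matrix.vecMul w (Ae2 * (Dmat z'')ᵀ) = 0 := by
  have key : ∀ (y : Fin 5 → Fin 2 → ℝ) (γ : Fin 5 → ℝ), (∀ i, y i = γ i • z i) →
      (Dmat y)ᵀ = (Dmat z)ᵀ * Matrix.diagonal γ := by
    intro y γ hy
    ext p i
    simp only [Dmat, Matrix.mul_diagonal, Matrix.transpose_apply, Matrix.of_apply, hy,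
      Pi.smul_apply, smul_eq_mul]
    split_ifs <;> ring
  have hker : LinearMap.ker (Matrix.vecMulLinear (Ae2 * (Dmat z)ᵀ)) ≠ ⊥ := by
    apply LinearMap.ker_ne_bot_of_finrank_lt
    simp
  obtain ⟨w, hw, hw0⟩ := Submodule.exists_mem_ne_zero_of_ne_bot hker
  have hw' : Matrix.vecMul w (Ae2 * (Dmat z)ᵀ) = 0 := hw
  refine ⟨w, hw0, ?_, ?_⟩
  · rw [key z' α hz', ← Matrix.mul_assoc, ← Matrix.vecMul_vecMul, ← Matrix.vecMul_vecMul, hw']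
    simp
  · rw [key z'' β hz'', ← Matrix.mul_assoc, ← Matrix.vecMul_vecMul, hw']
    simp
end

section
/- Let d₁, …, d₅ be positive reals. Then the set of frameworks x = (x₁,x₂,x₃,x₄) ∈ (ℝ²)⁴ satisfying ‖x₂−x₁‖² = d₁, ‖x₃−x₂‖² = d₂, ‖x₁−x₃‖² = d₃, ‖x₃−x₄‖² = d₄ and ‖x₄−x₁‖² = d₅ is covered by at most 4 orbits of the group of orientation-preserving rigid motions of the plane: there exist frameworks y¹, y², y³, y⁴ ∈ (ℝ²)⁴ such that every framework x satisfying the five constraints equals (g(yʲ₁), g(yʲ₂), g(yʲ₃), g(yʲ₄)) for some j ∈ {1,2,3,4} and some map g : ℝ² → ℝ² which is a composition of a rotation and a translation. Hence the set of design equilibria of the 2-cycles is finite up to rigid transformations. -/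
open Matrix

/-- A point at prescribed distances from the two ends of a segment: two possibilities. -/
lemma two_points (p q v w s D E : ℝ) (hs : 0 < s) (h1 : p * p + q * q = s * s)
    (h2 : v * v + w * w = D) (h3 : (p - v) * (p - v) + (q - w) * (q - w) = E) :
    ∃ ε : ℝ, (ε = 1 ∨ ε = -1) ∧
      v = p / s * ((D + s * s - E) / (2 * s))
        - q / s * (ε * √(D - ((D + s * s - E) / (2 * s)) ^ 2)) ∧
      w = q / s * ((D + s * s - E) / (2 * s))
        + p / s * (ε * √(D - ((D + s * s - E) / (2 * s)) ^ 2)) := by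
  have hs0 : s ≠ 0 := hs.ne'
  have ha : (D + s * s - E) / (2 * s) = (p * v + q * w) / s := by
    rw [div_eq_div_iff (by positivity) hs0]
    subst h2 h3
    linear_combination (-s) * h1
  rw [ha]
  have hb : D - ((p * v + q * w) / s) ^ 2 = ((p * w - q * v) / s) ^ 2 := by
    subst h2
    field_simp
    linear_combination (-(v * v + w * w)) * h1
  rw [hb, Real.sqrt_sq_eq_abs]
  obtain ⟨ε, hε, he⟩ : ∃ ε : ℝ, (ε = 1 ∨ ε = -1) ∧
      ε * |(p * w - q * v) / s| = (p * w - q * v) / s := by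
    rcases abs_choice ((p * w - q * v) / s) with h | h
    · exact ⟨1, Or.inl rfl, by rw [h]; ring⟩
    · exact ⟨-1, Or.inr rfl, by rw [h]; ring⟩
  refine ⟨ε, hε, ?_, ?_⟩
  · rw [he]; field_simp; linear_combination (-v) * h1
  · rw [he]; field_simp; linear_combination (-w) * h1

/-- The set of frameworks of the 2-cycles realizing prescribed positive squared edge
lengths `d₁,…,d₅` is covered by at most 4 orbits of the group of orientation-preserving
rigid motions of the plane: there exist four frameworks `y¹,…,y⁴` such that any
framework satisfying the five edge-length constraints is the image of some `yʲ` under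
a rotation (an orthogonal matrix of determinant one) followed by a translation. -/
theorem design_equilibria_finite_up_to_rigid_motions (d : Fin 5 → ℝ)
    (hd : ∀ i, 0 < d i) :
    ∃ y : Fin 4 → Fin 4 → Fin 2 → ℝ,
      ∀ x : Fin 4 → Fin 2 → ℝ,
        ((x 1 - x 0) ⬝ᵥ (x 1 - x 0) = d 0 ∧
         (x 2 - x 1) ⬝ᵥ (x 2 - x 1) = d 1 ∧
         (x 0 - x 2) ⬝ᵥ (x 0 - x 2) = d 2 ∧
         (x 2 - x 3) ⬝ᵥ (x 2 - x 3) = d 3 ∧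
         (x 3 - x 0) ⬝ᵥ (x 3 - x 0) = d 4) →
        ∃ j : Fin 4, ∃ R : Matrix (Fin 2) (Fin 2) ℝ, ∃ t : Fin 2 → ℝ,
          Rᵀ * R = 1 ∧ R.det = 1 ∧ ∀ i : Fin 4, x i = R.mulVec (y j i) + t := by
  set s := √(d 2) with hsdef
  have hs : 0 < s := Real.sqrt_pos.2 (hd 2)
  have hss : s * s = d 2 := Real.mul_self_sqrt (hd 2).le
  refine ⟨fun j => ![0,
    ![(d 0 + s * s - d 1) / (2 * s),
      (![1, 1, -1, -1] : Fin 4 → ℝ) j * √(d 0 - ((d 0 + s * s - d 1) / (2 * s)) ^ 2)],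
    ![s, 0],
    ![(d 4 + s * s - d 3) / (2 * s),
      (![1, -1, 1, -1] : Fin 4 → ℝ) j * √(d 4 - ((d 4 + s * s - d 3) / (2 * s)) ^ 2)]], ?_⟩
  rintro x ⟨h0, h1, h2, h3, h4⟩
  simp only [dotProduct, Fin.sum_univ_two, Pi.sub_apply] at h0 h1 h2 h3 h4
  have hpq : (x 2 0 - x 0 0) * (x 2 0 - x 0 0) + (x 2 1 - x 0 1) * (x 2 1 - x 0 1)
      = s * s := by rw [hss, ← h2]; ring
  obtain ⟨ε, hε, e1, e2⟩ := two_points (x 2 0 - x 0 0) (x 2 1 - x 0 1)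
    (x 1 0 - x 0 0) (x 1 1 - x 0 1) s (d 0) (d 1) hs hpq h0 (by rw [← h1]; ring)
  obtain ⟨δ, hδ, f1, f2⟩ := two_points (x 2 0 - x 0 0) (x 2 1 - x 0 1)
    (x 3 0 - x 0 0) (x 3 1 - x 0 1) s (d 4) (d 3) hs hpq h4 (by rw [← h3]; ring)
  obtain ⟨j, hj1, hj2⟩ : ∃ j : Fin 4, (![1, 1, -1, -1] : Fin 4 → ℝ) j = ε ∧
      (![1, -1, 1, -1] : Fin 4 → ℝ) j = δ := by
    rcases hε with rfl | rfl <;> rcases hδ with rfl | rfl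
    · exact ⟨0, by simp, by simp⟩
    · exact ⟨1, by simp, by simp⟩
    · exact ⟨2, by simp, by simp⟩
    · exact ⟨3, by simp, by simp⟩
  have hn : (x 2 0 - x 0 0) / s * ((x 2 0 - x 0 0) / s)
      + (x 2 1 - x 0 1) / s * ((x 2 1 - x 0 1) / s) = 1 := by
    field_simp
    linear_combination hpq
  refine ⟨j, !![(x 2 0 - x 0 0) / s, -((x 2 1 - x 0 1) / s);
    (x 2 1 - x 0 1) / s, (x 2 0 - x 0 0) / s], x 0, ?_, ?_, ?_⟩
  · ext a b
    fin_cases a <;> fin_cases b <;>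
      simp [Matrix.mul_apply, Fin.sum_univ_two] <;> linarith
  · rw [Matrix.det_fin_two_of]
    linarith
  · beta_reduce
    rw [hj1, hj2]
    have hc : ∀ z : ℝ, z / s * s = z := fun z => div_mul_cancel₀ z hs.ne'
    intro i
    ext k
    fin_cases i <;> fin_cases k <;>
      simp only [Matrix.mulVec, dotProduct, Fin.sum_univ_two, Pi.add_apply, Fin.zero_eta,
        Fin.mk_one, Fin.reduceFinMk, Matrix.cons_val, Matrix.of_apply, Matrix.cons_val_zero,
        Matrix.cons_val_one, Pi.zero_apply, hc] <;> linarith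
end

section
/- Consider the 2-cycles closed-loop vector field F where u₁, u₅ : ℝ³ → ℝ are continuously differentiable with u₁(0,0,s) = u₅(0,0,s) = 0 for all s ∈ ℝ, and u₂, u₃, u₄ : ℝ → ℝ are differentiable with u₂(0) = u₃(0) = u₄(0) = 0. Let z⁰ = (z⁰₁,…,z⁰₅) ∈ (ℝ²)⁵ be a design equilibrium, i.e. eᵢ = z⁰ᵢ·z⁰ᵢ − dᵢ = 0 for all i, and set s₀ = z⁰₁·z⁰₅. Then F is differentiable at z⁰ and its Jacobian, as a 10×10 matrix, equals A_e^{(2)}·D(z')ᵀ·D(z⁰), where z'₁ = 2(∂₁u₁(0,0,s₀)·z⁰₁ + ∂₁u₅(0,0,s₀)·z⁰₅), z'₅ = 2(∂₂u₁(0,0,s₀)·z⁰₁ + ∂₂u₅(0,0,s₀)·z⁰₅), and z'ᵢ = 2uᵢ'(0)·z⁰ᵢ for i = 2,3,4 (∂₁, ∂₂ denoting partial derivatives in the first and second arguments). -/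
open Matrix

/-- The closed-loop vector field of the 2-cycles formation in edge variables,
with the state encoded as a function `ζ : Fin 5 × Fin 2 → ℝ` (so `zᵢ = ζ(i, ·)`).
`u1, u5 : ℝ³ → ℝ` are the controls of agent 1 (evaluated at `(e₁, e₅, z₁·z₅)`) and
`u2, u3, u4 : ℝ → ℝ` those of the other agents (evaluated at `e₂, e₃, e₄`), where
`eᵢ = zᵢ·zᵢ − dᵢ`. -/
noncomputable def twoCyclesF (d : Fin 5 → ℝ) (u1 u5 : ℝ × ℝ × ℝ → ℝ)
    (u2 u3 u4 : ℝ → ℝ) (ζ : Fin 5 × Fin 2 → ℝ) : Fin 5 × Fin 2 → ℝ := fun p =>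
  let z : Fin 5 → Fin 2 → ℝ := fun i k => ζ (i, k)
  let e : Fin 5 → ℝ := fun j => z j ⬝ᵥ z j - d j
  let a : ℝ := u1 (e 0, e 4, z 0 ⬝ᵥ z 4)
  let b : ℝ := u5 (e 0, e 4, z 0 ⬝ᵥ z 4)
  (![u2 (e 1) • z 1 - a • z 0 - b • z 4,
     u3 (e 2) • z 2 - u2 (e 1) • z 1,
     a • z 0 + b • z 4 - u3 (e 2) • z 2,
     u3 (e 2) • z 2 - u4 (e 3) • z 3,
     u4 (e 3) • z 3 - a • z 0 - b • z 4]) p.1 p.2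

/-- The functional `h ↦ zᵢ · hᵢ`. -/
noncomputable def edgeL (ζ0 : Fin 5 × Fin 2 → ℝ) (i j : Fin 5) : (Fin 5 × Fin 2 → ℝ) →L[ℝ] ℝ :=
  ζ0 (i, 0) • ContinuousLinearMap.proj (R := ℝ) (φ := fun _ : Fin 5 × Fin 2 => ℝ) (j, 0)
    + ζ0 (i, 1) • ContinuousLinearMap.proj (R := ℝ) (φ := fun _ : Fin 5 × Fin 2 => ℝ) (j, 1)

lemma edgeL_apply (ζ0 h : Fin 5 × Fin 2 → ℝ) (i j : Fin 5) :
    edgeL ζ0 i j h = ζ0 (i, 0) * h (j, 0) + ζ0 (i, 1) * h (j, 1) := by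
  simp [edgeL]

lemma hasFDerivAt_coord (ζ0 : Fin 5 × Fin 2 → ℝ) (p : Fin 5 × Fin 2) :
    HasFDerivAt (fun ζ : Fin 5 × Fin 2 → ℝ => ζ p)
      (ContinuousLinearMap.proj (R := ℝ) (φ := fun _ : Fin 5 × Fin 2 => ℝ) p) ζ0 :=
  hasFDerivAt_apply p ζ0

lemma hasFDerivAt_dot (ζ0 : Fin 5 × Fin 2 → ℝ) (i j : Fin 5) :
    HasFDerivAt (fun ζ : Fin 5 × Fin 2 → ℝ => (fun k => ζ (i, k)) ⬝ᵥ (fun k => ζ (j, k)))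
      (edgeL ζ0 i j + edgeL ζ0 j i) ζ0 := by
  have h := ((hasFDerivAt_coord ζ0 (i, 0)).mul (hasFDerivAt_coord ζ0 (j, 0))).add
    ((hasFDerivAt_coord ζ0 (i, 1)).mul (hasFDerivAt_coord ζ0 (j, 1)))
  simp only [dotProduct, Fin.sum_univ_two]
  refine h.congr_fderiv ?_
  ext1 x
  simp [edgeL_apply]
  ring

lemma hasFDerivAt_err (d : Fin 5 → ℝ) (ζ0 : Fin 5 × Fin 2 → ℝ) (j : Fin 5) :
    HasFDerivAt (fun ζ : Fin 5 × Fin 2 → ℝ => (fun k => ζ (j, k)) ⬝ᵥ (fun k => ζ (j, k)) - d j)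
      ((2 : ℝ) • edgeL ζ0 j j) ζ0 := by
  refine ((hasFDerivAt_dot ζ0 j j).sub_const (d j)).congr_fderiv ?_
  rw [two_smul]

/-- A product with a scalar vanishing at the base point. -/
lemma hasFDerivAt_mul_coord {ζ0 : Fin 5 × Fin 2 → ℝ} {g : (Fin 5 × Fin 2 → ℝ) → ℝ}
    {g' : (Fin 5 × Fin 2 → ℝ) →L[ℝ] ℝ} (hg : HasFDerivAt g g' ζ0) (h0 : g ζ0 = 0)
    (p : Fin 5 × Fin 2) :
    HasFDerivAt (fun ζ => g ζ * ζ p) (ζ0 p • g') ζ0 := by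
  refine (hg.mul (hasFDerivAt_coord ζ0 p)).congr_fderiv ?_
  simp [h0]

lemma hasFDerivAt_ctrl_single (d : Fin 5 → ℝ) (u : ℝ → ℝ) (hu : Differentiable ℝ u) (hu0 : u 0 = 0)
    (ζ0 : Fin 5 × Fin 2 → ℝ) (j : Fin 5)
    (hdes : (fun k => ζ0 (j, k)) ⬝ᵥ (fun k => ζ0 (j, k)) = d j) (p : Fin 5 × Fin 2) :
    HasFDerivAt (fun ζ : Fin 5 × Fin 2 → ℝ =>
        u ((fun k => ζ (j, k)) ⬝ᵥ (fun k => ζ (j, k)) - d j) * ζ p)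
      (ζ0 p • (deriv u 0 • ((2 : ℝ) • edgeL ζ0 j j))) ζ0 := by
  have he : (fun k => ζ0 (j, k)) ⬝ᵥ (fun k => ζ0 (j, k)) - d j = 0 := sub_eq_zero.2 hdes
  apply hasFDerivAt_mul_coord
  · have h1 : HasDerivAt u (deriv u 0)
        ((fun k => ζ0 (j, k)) ⬝ᵥ (fun k => ζ0 (j, k)) - d j) := by
      rw [he]; exact (hu 0).hasDerivAt
    exact h1.comp_hasFDerivAt ζ0 (hasFDerivAt_err d ζ0 j)
  · simp only [he, hu0]

lemma fderiv_third (u : ℝ × ℝ × ℝ → ℝ) (hu : ContDiff ℝ 1 u) (hu0 : ∀ s : ℝ, u (0, 0, s) = 0)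
    (s a b c : ℝ) : fderiv ℝ u (0, 0, s) (a, b, c)
      = a * fderiv ℝ u (0, 0, s) (1, 0, 0) + b * fderiv ℝ u (0, 0, s) (0, 1, 0) := by
  have hd : HasFDerivAt u (fderiv ℝ u (0, 0, s)) (0, 0, s) :=
    (hu.differentiable one_ne_zero _).hasFDerivAt
  have hc : HasDerivAt (fun t : ℝ => ((0 : ℝ), (0 : ℝ), t)) (0, 0, 1) s :=
    (hasDerivAt_const s (0 : ℝ)).prodMk ((hasDerivAt_const s (0 : ℝ)).prodMk (hasDerivAt_id s))
  have h1 := hd.comp_hasDerivAt s hc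
  have h2 : (u ∘ fun t : ℝ => ((0 : ℝ), (0 : ℝ), t)) = fun _ => 0 := by
    funext t; exact hu0 t
  rw [h2] at h1
  have h3 : fderiv ℝ u (0, 0, s) (0, 0, 1) = 0 := h1.unique (hasDerivAt_const s (0 : ℝ))
  have h4 : ((a, b, c) : ℝ × ℝ × ℝ)
      = a • ((1, 0, 0) : ℝ × ℝ × ℝ) + b • ((0, 1, 0) : ℝ × ℝ × ℝ)
        + c • ((0, 0, 1) : ℝ × ℝ × ℝ) := by
    simp
  rw [h4, map_add, map_add, map_smul, map_smul, map_smul, h3]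
  simp

lemma hasFDerivAt_triple (d : Fin 5 → ℝ) (u : ℝ × ℝ × ℝ → ℝ) (hu : ContDiff ℝ 1 u)
    (hu0 : ∀ s : ℝ, u (0, 0, s) = 0) (ζ0 : Fin 5 × Fin 2 → ℝ)
    (hdes : ∀ i : Fin 5, (fun k => ζ0 (i, k)) ⬝ᵥ (fun k => ζ0 (i, k)) = d i)
    (s0 : ℝ) (hs : s0 = (fun k => ζ0 (0, k)) ⬝ᵥ (fun k => ζ0 (4, k))) (p : Fin 5 × Fin 2) :
    HasFDerivAt (fun ζ : Fin 5 × Fin 2 → ℝ =>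
        u ((fun k => ζ (0, k)) ⬝ᵥ (fun k => ζ (0, k)) - d 0,
          (fun k => ζ (4, k)) ⬝ᵥ (fun k => ζ (4, k)) - d 4,
          (fun k => ζ (0, k)) ⬝ᵥ (fun k => ζ (4, k))) * ζ p)
      (ζ0 p • (fderiv ℝ u (0, 0, s0) (1, 0, 0) • ((2 : ℝ) • edgeL ζ0 0 0)
        + fderiv ℝ u (0, 0, s0) (0, 1, 0) • ((2 : ℝ) • edgeL ζ0 4 4))) ζ0 := by
  have he : ∀ j, (fun k => ζ0 (j, k)) ⬝ᵥ (fun k => ζ0 (j, k)) - d j = 0 :=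
    fun j => sub_eq_zero.2 (hdes j)
  apply hasFDerivAt_mul_coord
  · have h1 : HasFDerivAt u (fderiv ℝ u (0, 0, s0))
        ((fun k => ζ0 (0, k)) ⬝ᵥ (fun k => ζ0 (0, k)) - d 0,
          (fun k => ζ0 (4, k)) ⬝ᵥ (fun k => ζ0 (4, k)) - d 4,
          (fun k => ζ0 (0, k)) ⬝ᵥ (fun k => ζ0 (4, k))) := by
      rw [he, he, ← hs]; exact (hu.differentiable one_ne_zero _).hasFDerivAt
    refine (h1.comp ζ0 ((hasFDerivAt_err d ζ0 0).prodMk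
      ((hasFDerivAt_err d ζ0 4).prodMk (hasFDerivAt_dot ζ0 0 4)))).congr_fderiv ?_
    ext1 x
    simp only [ContinuousLinearMap.comp_apply, ContinuousLinearMap.prod_apply]
    rw [fderiv_third u hu hu0]
    simp only [_root_.add_apply, _root_.smul_apply, smul_eq_mul]
    ring
  · simp only [he, hu0]

/-- Entries of the Jacobian applied to a vector. -/
lemma jac_apply (z' : Fin 5 → Fin 2 → ℝ) (ζ0 h : Fin 5 × Fin 2 → ℝ) (i : Fin 5) (k : Fin 2) :
    ((Ae2 * (Dmat z')ᵀ * Dmat fun i k => ζ0 (i, k)) *ᵥ h) (i, k)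
      = ∑ j, Ae i j * z' j k * edgeL ζ0 j j h := by
  have h1 : ∀ j, (Dmat (fun i k => ζ0 (i, k)) *ᵥ h) j = edgeL ζ0 j j h := by
    intro j
    simp [mulVec, dotProduct, Dmat, Fintype.sum_prod_type, edgeL_apply]
  have h2 : ∀ j, (Ae2 * (Dmat z')ᵀ) (i, k) j = Ae i j * z' j k := by
    intro j
    simp [Matrix.mul_apply, Ae2, Dmat, Fintype.sum_prod_type, Matrix.one_apply]
  rw [← mulVec_mulVec]
  simp only [mulVec, dotProduct] at h1 ⊢
  simp only [h1, h2]

/-- At a design equilibrium `z⁰` (all edge errors zero) of the 2-cycles with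
compatible controls, the Jacobian of the closed-loop vector field `F` is the 10×10
matrix `A_e^{(2)}·D(z')ᵀ·D(z⁰)`, where
`z'₁ = 2(∂₁u₁(0,0,s₀)·z⁰₁ + ∂₁u₅(0,0,s₀)·z⁰₅)`,
`z'₅ = 2(∂₂u₁(0,0,s₀)·z⁰₁ + ∂₂u₅(0,0,s₀)·z⁰₅)`,
`z'ᵢ = 2uᵢ'(0)·z⁰ᵢ` for `i = 2,3,4`, and `s₀ = z⁰₁·z⁰₅`. -/
theorem jacobian_twoCyclesF_at_design_equilibrium (d : Fin 5 → ℝ)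
    (u1 u5 : ℝ × ℝ × ℝ → ℝ) (u2 u3 u4 : ℝ → ℝ)
    (hu1 : ContDiff ℝ 1 u1) (hu5 : ContDiff ℝ 1 u5)
    (hu10 : ∀ s : ℝ, u1 (0, 0, s) = 0) (hu50 : ∀ s : ℝ, u5 (0, 0, s) = 0)
    (hu2 : Differentiable ℝ u2) (hu3 : Differentiable ℝ u3)
    (hu4 : Differentiable ℝ u4)
    (hu20 : u2 0 = 0) (hu30 : u3 0 = 0) (hu40 : u4 0 = 0)
    (ζ0 : Fin 5 × Fin 2 → ℝ)
    (hdes : ∀ i : Fin 5, (fun k => ζ0 (i, k)) ⬝ᵥ (fun k => ζ0 (i, k)) = d i) :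
    let z0 : Fin 5 → Fin 2 → ℝ := fun i k => ζ0 (i, k)
    let s0 : ℝ := z0 0 ⬝ᵥ z0 4
    let z' : Fin 5 → Fin 2 → ℝ :=
      ![(2 * fderiv ℝ u1 (0, 0, s0) (1, 0, 0)) • z0 0
          + (2 * fderiv ℝ u5 (0, 0, s0) (1, 0, 0)) • z0 4,
        (2 * deriv u2 0) • z0 1,
        (2 * deriv u3 0) • z0 2,
        (2 * deriv u4 0) • z0 3,
        (2 * fderiv ℝ u1 (0, 0, s0) (0, 1, 0)) • z0 0
          + (2 * fderiv ℝ u5 (0, 0, s0) (0, 1, 0)) • z0 4]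
    HasFDerivAt (twoCyclesF d u1 u5 u2 u3 u4)
      (LinearMap.toContinuousLinearMap ((Ae2 * (Dmat z')ᵀ * Dmat z0).mulVecLin)) ζ0 := by
  intro z0 s0 z'
  have A := fun p => hasFDerivAt_triple d u1 hu1 hu10 ζ0 hdes s0 rfl p
  have B := fun p => hasFDerivAt_triple d u5 hu5 hu50 ζ0 hdes s0 rfl p
  have C2 := fun p => hasFDerivAt_ctrl_single d u2 hu2 hu20 ζ0 1 (hdes 1) p
  have C3 := fun p => hasFDerivAt_ctrl_single d u3 hu3 hu30 ζ0 2 (hdes 2) p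
  have C4 := fun p => hasFDerivAt_ctrl_single d u4 hu4 hu40 ζ0 3 (hdes 3) p
  rw [hasFDerivAt_pi']
  rintro ⟨i, k⟩
  have key : ∀ h, ((ContinuousLinearMap.proj (R := ℝ) (φ := fun _ : Fin 5 × Fin 2 => ℝ) (i, k)).comp
      (LinearMap.toContinuousLinearMap ((Ae2 * (Dmat z')ᵀ * Dmat z0).mulVecLin))) h
      = ∑ j, Ae i j * z' j k * edgeL ζ0 j j h := fun h => jac_apply z' ζ0 h i k
  fin_cases i
  · refine HasFDerivAt.congr_fderiv (((C2 (1, k)).sub (A (0, k))).sub (B (4, k))) ?_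
    ext1 h
    refine Eq.trans ?_ (key h).symm
    simp [Fin.sum_univ_five, Ae, z', z0]
    ring
  · refine HasFDerivAt.congr_fderiv ((C3 (2, k)).sub (C2 (1, k))) ?_
    ext1 h
    refine Eq.trans ?_ (key h).symm
    simp [Fin.sum_univ_five, Ae, z', z0]
    ring
  · refine HasFDerivAt.congr_fderiv (((A (0, k)).add (B (4, k))).sub (C3 (2, k))) ?_
    ext1 h
    refine Eq.trans ?_ (key h).symm
    simp [Fin.sum_univ_five, Ae, z', z0]
    ring
  · refine HasFDerivAt.congr_fderiv ((C3 (2, k)).sub (C4 (3, k))) ?_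
    ext1 h
    refine Eq.trans ?_ (key h).symm
    simp [Fin.sum_univ_five, Ae, z', z0]
    ring
  · refine HasFDerivAt.congr_fderiv (((C4 (3, k)).sub (A (0, k))).sub (B (4, k))) ?_
    ext1 h
    refine Eq.trans ?_ (key h).symm
    simp [Fin.sum_univ_five, Ae, z', z0]
    ring
end
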